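/- Let k be a field, g a Lie algebra over k, and V a 1-dimensional k-vector space with basis {x}. (1) If an extending datum (◁, ▷, f, {−,−}) of g through V satisfies the Lie extending structure axioms, then necessarily f = 0 and {−,−} = 0, and there is a unique pair of linear maps λ : g → k, D : g → g with x ◁ g = λ(g)·x and x ▷ g = D(g) for all g ∈ g. (2) Conversely, for linear maps λ : g → k and D : g → g, the extending datum defined by x ◁ g := λ(g)·x, x ▷ g := D(g), f := 0, {−,−} := 0 is a Lie extending structure of g through V if and only if (λ, D) is a twisted derivation of g. Hence the Lie extending structures of g through V are in bijection with the twisted derivations of g. -/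

import Mathlib

def IsLieBracket {L : Type*} [AddCommGroup L] (B : L → L → L) : Prop :=
  (∀ p, B p p = 0) ∧ ∀ p q r, B p (B q r) + B q (B r p) + B r (B p q) = 0

def unifiedBracket {k G V : Type*} [Field k] [LieRing G] [LieAlgebra k G]
    [AddCommGroup V] [Module k V]
    (tl : V →ₗ[k] G →ₗ[k] V) (tr : V →ₗ[k] G →ₗ[k] G)
    (f : V →ₗ[k] V →ₗ[k] G) (br : V →ₗ[k] V →ₗ[k] V) :
    G × V → G × V → G × V :=
  fun p q =>
    (⁅p.1, q.1⁆ + tr p.2 q.1 - tr q.2 p.1 + f p.2 q.2,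
     br p.2 q.2 + tl p.2 q.1 - tl q.2 p.1)

/-- The bracket of the unified product with trivial cocycle and trivial bracket on `V`,
evaluated on elements whose `V`-components are multiples of `x`. -/
lemma unifiedBracket_zero_zero_smul {k G V : Type*} [Field k] [LieRing G]
    [LieAlgebra k G] [AddCommGroup V] [Module k V] {x : V}
    {lam : G →ₗ[k] k} {D : G →ₗ[k] G}
    {tl : V →ₗ[k] G →ₗ[k] V} {tr : V →ₗ[k] G →ₗ[k] G}
    (htl : ∀ g : G, tl x g = lam g • x) (htr : ∀ g : G, tr x g = D g)
    (g h : G) (c d : k) :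
    unifiedBracket tl tr 0 0 (g, c • x) (h, d • x) =
      (⁅g, h⁆ + c • D h - d • D g, (c * lam h - d * lam g) • x) := by
  simp [unifiedBracket, htl, htr, sub_smul, mul_smul]

/-- Proposition 4.4: for a 1-dimensional space `V` with basis `{x}`, Lie extending
structures of `G` through `V` are in bijection with twisted derivations `(λ, D)`;
the cocycle and the bracket of `V` are necessarily trivial, the two actions are
given by `x ◁ g = λ(g)·x` and `x ▷ g = D(g)`. -/
theorem lieExtendingStructure_dim_one {k G V : Type*} [Field k] [LieRing G]
    [LieAlgebra k G] [AddCommGroup V] [Module k V]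
    (b : Module.Basis (Fin 1) k V) (x : V) (hx : x = b 0) :
    (∀ (tl : V →ₗ[k] G →ₗ[k] V) (tr : V →ₗ[k] G →ₗ[k] G)
        (f : V →ₗ[k] V →ₗ[k] G) (br : V →ₗ[k] V →ₗ[k] V),
        IsLieBracket (unifiedBracket tl tr f br) →
        f = 0 ∧ br = 0 ∧
          ∃! lD : (G →ₗ[k] k) × (G →ₗ[k] G),
            ∀ g : G, tl x g = lD.1 g • x ∧ tr x g = lD.2 g) ∧
    (∀ (lam : G →ₗ[k] k) (D : G →ₗ[k] G)
        (tl : V →ₗ[k] G →ₗ[k] V) (tr : V →ₗ[k] G →ₗ[k] G),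
        (∀ g : G, tl x g = lam g • x) → (∀ g : G, tr x g = D g) →
        (IsLieBracket (unifiedBracket tl tr 0 0) ↔
          ((∀ g h : G, lam ⁅g, h⁆ = 0) ∧
            ∀ g h : G, D ⁅g, h⁆ = ⁅D g, h⁆ + ⁅g, D h⁆ + lam g • D h - lam h • D g))) := by
  have hx0 : x ≠ 0 := hx ▸ b.ne_zero 0
  have hspan : ∀ v : V, v = b.repr v 0 • x := fun v => by
    simpa [hx] using (b.sum_repr v).symm
  have hrepr : b.repr x 0 = 1 := by simp [hx]
  refine ⟨fun tl tr f br hL => ?_, fun lam D tl tr htl htr => ⟨fun hL => ?_, fun hD => ?_⟩⟩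
  · have hself := hL.1 (0, x)
    simp only [unifiedBracket, Prod.mk_eq_zero, lie_self, map_zero, add_zero, sub_zero,
      zero_add] at hself
    refine ⟨?_, ?_, ((b.coord 0).comp (tl x), tr x), fun g => ⟨hspan _, rfl⟩, ?_⟩
    · ext u v
      rw [hspan u, hspan v]
      simp [hself.1]
    · ext u v
      rw [hspan u, hspan v]
      simp [hself.2]
    · rintro ⟨lam, D⟩ hlD
      refine Prod.ext (LinearMap.ext fun g => ?_) (LinearMap.ext fun g => (hlD g).2.symm)
      simp [(hlD g).1, hrepr]
  · have hjac : ∀ g h : G,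
        D ⁅g, h⁆ = ⁅D g, h⁆ + ⁅g, D h⁆ + lam g • D h - lam h • D g ∧ lam ⁅g, h⁆ = 0 := by
      intro g h
      have hJ := hL.2 (g, (0 : k) • x) (h, (0 : k) • x) (0, (1 : k) • x)
      simp only [unifiedBracket_zero_zero_smul htl htr, Prod.mk_add_mk, Prod.mk_eq_zero,
        ← add_smul, smul_eq_zero, hx0, or_false] at hJ
      obtain ⟨hG, hk⟩ := hJ
      rw [← lie_skew (D g) h]
      constructor
      · simp only [lie_zero, zero_lie, lie_add, lie_sub, map_add, map_sub, map_zero, zero_smul,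
          one_smul] at hG
        linear_combination (norm := module) hG
      · simp only [map_add, map_sub, map_smul, map_zero, zero_smul] at hk
        linear_combination hk
    exact ⟨fun g h => (hjac g h).2, fun g h => (hjac g h).1⟩
  · obtain ⟨hlam, hD⟩ := hD
    refine ⟨fun ⟨g, u⟩ => ?_, fun ⟨g, u⟩ ⟨h, v⟩ ⟨l, w⟩ => ?_⟩
    · simp [unifiedBracket]
    · rw [hspan u, hspan v, hspan w]
      simp only [unifiedBracket_zero_zero_smul htl htr, Prod.mk_add_mk, Prod.mk_eq_zero]
      constructor
      · simp only [map_add, map_sub, map_smul, lie_add, lie_sub, lie_smul, hD]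
        rw [← lie_skew (D g) h, ← lie_skew (D h) l, ← lie_skew (D l) g]
        linear_combination (norm := module) lie_jacobi g h l
      · rw [← add_smul, ← add_smul]
        simp only [map_add, map_sub, map_smul, hlam, smul_eq_mul]
        convert zero_smul k x using 2
        ring
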